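/- In LPQ⊃,F, logical equivalence is not the same as logical consequence together with its inverse: there exist formulas A1 and A2 of LPQ⊃,F(Σ) such that {A1} ⊨ A2 and {A2} ⊨ A1 but A1 ≢ A2; for instance, for a proposition symbol p of Σ, the formulas A1 = (p ⊃ p) and A2 = ¬⊥ are mutual logical consequences but not logically equivalent. -/

import Mathlib

namespace LPQ

/-- The three truth values: true, false, both-true-and-false. -/
inductive TV : Type where
  | t : TV
  | f : TV
  | b : TV
deriving DecidableEq

/-- A first-order signature: function symbols and predicate symbols of each arity. -/
structure Signature : Type 1 where
  Func : ℕ → Type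
  Pred : ℕ → Type

/-- Terms over a signature (variables are natural numbers). -/
inductive Term (σ : Signature) : Type where
  | var : ℕ → Term σ
  | func : {n : ℕ} → σ.Func n → (Fin n → Term σ) → Term σ

/-- Formulas of LPQ⊃,F over a signature. -/
inductive Formula (σ : Signature) : Type where
  | falsum : Formula σ
  | pred : {n : ℕ} → σ.Pred n → (Fin n → Term σ) → Formula σ
  | eq : Term σ → Term σ → Formula σ
  | neg : Formula σ → Formula σ
  | and : Formula σ → Formula σ → Formula σ
  | or : Formula σ → Formula σ → Formula σ
  | imp : Formula σ → Formula σ → Formula σ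
  | all : ℕ → Formula σ → Formula σ
  | ex : ℕ → Formula σ → Formula σ

variable {σ : Signature}

/-- Free variables of a term. -/
def Term.fv : Term σ → Set ℕ
  | .var x => {x}
  | .func _ ts => ⋃ i, (ts i).fv

/-- Free variables of a formula. -/
def Formula.fv : Formula σ → Set ℕ
  | .falsum => ∅
  | .pred _ ts => ⋃ i, (ts i).fv
  | .eq u v => u.fv ∪ v.fv
  | .neg A => A.fv
  | .and A B => A.fv ∪ B.fv
  | .or A B => A.fv ∪ B.fv
  | .imp A B => A.fv ∪ B.fv
  | .all x A => A.fv \ {x}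
  | .ex x A => A.fv \ {x}

/-- A structure of LPQ⊃,F(σ): a nonempty domain, interpretations of the function
symbols, three-valued interpretations of the predicate symbols, and a three-valued
interpretation of equality which is designated on the diagonal. -/
structure Structure (σ : Signature) : Type 1 where
  Dom : Type
  nonempty : Nonempty Dom
  interpFunc : {n : ℕ} → σ.Func n → (Fin n → Dom) → Dom
  interpPred : {n : ℕ} → σ.Pred n → (Fin n → Dom) → TV
  interpEq : Dom → Dom → TV
  interpEq_refl : ∀ d, interpEq d d = TV.t ∨ interpEq d d = TV.b

/-- Value of a term in a structure under an assignment. -/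
def Term.eval (M : Structure σ) (α : ℕ → M.Dom) : Term σ → M.Dom
  | .var x => α x
  | .func f ts => M.interpFunc f (fun i => (ts i).eval M α)

open Classical in
/-- The three-valued interpretation of formulas of LPQ⊃,F. -/
noncomputable def Formula.eval (M : Structure σ) : (ℕ → M.Dom) → Formula σ → TV
  | α, .pred P ts => M.interpPred P (fun i => (ts i).eval M α)
  | α, .eq u v => M.interpEq (u.eval M α) (v.eval M α)
  | _, .falsum => TV.f
  | α, .neg A =>
      match A.eval M α with
      | TV.t => TV.f
      | TV.f => TV.t
      | TV.b => TV.b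
  | α, .and A B =>
      match A.eval M α, B.eval M α with
      | TV.t, TV.t => TV.t
      | TV.f, _ => TV.f
      | _, TV.f => TV.f
      | _, _ => TV.b
  | α, .or A B =>
      match A.eval M α, B.eval M α with
      | TV.t, _ => TV.t
      | _, TV.t => TV.t
      | TV.f, TV.f => TV.f
      | _, _ => TV.b
  | α, .imp A B =>
      match A.eval M α, B.eval M α with
      | TV.f, _ => TV.t
      | _, TV.t => TV.t
      | _, TV.f => TV.f
      | _, _ => TV.b
  | α, .all x A =>
      if ∀ d, Formula.eval M (Function.update α x d) A = TV.t then TV.t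
      else if ∃ d, Formula.eval M (Function.update α x d) A = TV.f then TV.f
      else TV.b
  | α, .ex x A =>
      if ∃ d, Formula.eval M (Function.update α x d) A = TV.t then TV.t
      else if ∀ d, Formula.eval M (Function.update α x d) A = TV.f then TV.f
      else TV.b

/-- Logical consequence of LPQ⊃,F: in every structure under every assignment,
either some premise is false or the conclusion is true or both-true-and-false. -/
def LCon (Γ : Set (Formula σ)) (A : Formula σ) : Prop :=
  ∀ (M : Structure σ) (α : ℕ → M.Dom),
    (∃ B ∈ Γ, B.eval M α = TV.f) ∨ (A.eval M α = TV.t ∨ A.eval M α = TV.b)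

/-- Logical equivalence of LPQ⊃,F: the same truth value in every structure
under every assignment. -/
def LEqv (A1 A2 : Formula σ) : Prop :=
  ∀ (M : Structure σ) (α : ℕ → M.Dom), A1.eval M α = A2.eval M α

end LPQ

namespace LPQ

section

variable {σ : Signature} {A : Formula σ}

theorem Formula.eval_neg_falsum (M : Structure σ) (α : ℕ → M.Dom) :
    (neg falsum : Formula σ).eval M α = TV.t := by
  simp only [eval]

theorem Formula.eval_imp_self (M : Structure σ) (α : ℕ → M.Dom) :
    (A.imp A).eval M α = if A.eval M α = TV.b then TV.b else TV.t := by
  simp only [eval]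
  cases A.eval M α <;> rfl

theorem lCon_neg_falsum (Γ : Set (Formula σ)) : LCon Γ (.neg .falsum) :=
  fun M α => Or.inr (Or.inl (Formula.eval_neg_falsum M α))

theorem lCon_imp_self (Γ : Set (Formula σ)) (A : Formula σ) : LCon Γ (A.imp A) := by
  intro M α
  right
  rw [Formula.eval_imp_self]
  exact (ite_eq_or_eq _ _ _).symm

theorem not_lEqv_imp_self_neg_falsum (hA : ∃ M α, A.eval M α = TV.b) :
    ¬ LEqv (A.imp A) (.neg .falsum) := by
  obtain ⟨M, α, hb⟩ := hA
  intro h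
  have hbt : TV.b = TV.t :=
    calc TV.b = (A.imp A).eval M α := by rw [Formula.eval_imp_self, if_pos hb]
      _ = (Formula.neg .falsum).eval M α := h M α
      _ = TV.t := Formula.eval_neg_falsum M α
  cases hbt

/-- The one-element structure in which every atomic formula, equations included, is
both true and false. It serves as the countermodel to equivalences. -/
def glutStructure (σ : Signature) : Structure σ where
  Dom := Unit
  nonempty := ⟨()⟩
  interpFunc _ _ := ()
  interpPred _ _ := TV.b
  interpEq _ _ := TV.b
  interpEq_refl _ := Or.inr rfl

theorem eval_pred_glutStructure {n : ℕ} (P : σ.Pred n) (ts : Fin n → Term σ)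
    (α : ℕ → (glutStructure σ).Dom) :
    (Formula.pred P ts).eval (glutStructure σ) α = TV.b := by
  simp only [Formula.eval, glutStructure]

-- Consequence only tests whether a value is `f`, so it cannot separate `t` from `b`.
theorem mutual_consequence_not_equivalence_general (hA : ∃ M α, A.eval M α = TV.b) :
    LCon {A.imp A} (.neg .falsum) ∧ LCon {.neg .falsum} (A.imp A) ∧
      ¬ LEqv (A.imp A) (.neg .falsum) :=
  ⟨lCon_neg_falsum _, lCon_imp_self _ A, not_lEqv_imp_self_neg_falsum hA⟩

end

/-- **In LPQ⊃,F logical equivalence is not the same as mutual logical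
consequence**: there exist formulas A1 and A2 with {A1} ⊨ A2 and {A2} ⊨ A1 but
A1 ≢ A2; in particular, for a proposition symbol p, the formulas p ⊃ p and ¬⊥
are mutual logical consequences but not logically equivalent. -/
theorem mutual_consequence_not_equivalence (σ : Signature) (p : σ.Pred 0) :
    (∃ A1 A2 : Formula σ, LCon {A1} A2 ∧ LCon {A2} A1 ∧ ¬ LEqv A1 A2) ∧
    (LCon {(Formula.pred p ![]).imp (Formula.pred p ![])}
        (Formula.neg .falsum : Formula σ) ∧
     LCon {(Formula.neg .falsum : Formula σ)}
        ((Formula.pred p ![]).imp (Formula.pred p ![])) ∧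
     ¬ LEqv ((Formula.pred p ![]).imp (Formula.pred p ![]))
        (Formula.neg .falsum : Formula σ)) := by
  have separated := mutual_consequence_not_equivalence_general
    ⟨glutStructure σ, fun _ => (), eval_pred_glutStructure p ![] _⟩
  exact ⟨⟨_, _, separated⟩, separated⟩

end LPQ
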